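/- arXiv:1208.0713 — 2 statements merged into one kernel-verified Lean document; each statement's English description precedes it below -/
import Mathlib

section
/- Let 1 ≤ m ≤ n and let u, v ∈ A*. Then u and v satisfy exactly the same formulas of the fragment uTL^X_{m,n} of unary temporal logic if and only if u and v agree on rankers from uR^X_{m,n}. The analogous statement holds for uTL^Y_{m,n} and uR^Y_{m,n}. -/
namespace RankerPaper

variable {A : Type*} [DecidableEq A]

/-- Letters of rankers: `X a` ("next `a` to the right") and `Y a` ("next `a` to the left"). -/
inductive RLetter (A : Type*) where
  | X : A → RLetter A
  | Y : A → RLetter A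
  deriving DecidableEq

/-- Least `a`-position of `u` strictly greater than `q` (positions are 1-indexed). -/
def nextOcc (u : List A) (a : A) (q : ℕ) : Option ℕ :=
  ((List.range (u.length + 2)).filter (fun i => decide (q < i ∧ u[i-1]? = some a))).head?

/-- Greatest `a`-position of `u` strictly less than `q` (positions are 1-indexed). -/
def prevOcc (u : List A) (a : A) (q : ℕ) : Option ℕ :=
  ((List.range (u.length + 2)).filter
    (fun i => decide (1 ≤ i ∧ i < q ∧ u[i-1]? = some a))).getLast?

/-- One evaluation step of a ranker letter from position `q`. -/
def stepR (u : List A) : RLetter A → ℕ → Option ℕ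
  | .X a, q => nextOcc u a q
  | .Y a, q => prevOcc u a q

/-- Evaluation of a ranker from position `q`, processing letters left to right. -/
def evalFrom (u : List A) : List (RLetter A) → ℕ → Option ℕ
  | [], q => some q
  | z :: r, q => (stepR u z q).bind (evalFrom u r)

/-- Starting position: `0` for an `X`-letter, `|u|+1` for a `Y`-letter. -/
def startPos (u : List A) : RLetter A → ℕ
  | .X _ => 0
  | .Y _ => u.length + 1

/-- The position `r(u)` defined by the ranker `r` on `u` (`none` if undefined;
empty rankers are considered undefined, rankers being nonempty words). -/
def evalR (u : List A) (r : List (RLetter A)) : Option ℕ :=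
  match r with
  | [] => none
  | z :: t => evalFrom u (z :: t) (startPos u z)

/-- `r` is defined on `u`. -/
def Defined (u : List A) (r : List (RLetter A)) : Prop := (evalR u r).isSome

/-- The position `r(u)` (defaulting to `0` when undefined). -/
def pos (u : List A) (r : List (RLetter A)) : ℕ := (evalR u r).getD 0

/-- Do two ranker letters have the same direction? -/
def sameDir : RLetter A → RLetter A → Bool
  | .X _, .X _ => true
  | .Y _, .Y _ => true
  | _, _ => false

/-- Number of (alternating) blocks of a ranker. -/
def numBlocks : List (RLetter A) → ℕ
  | [] => 0
  | [_] => 1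
  | z :: w :: t => (if sameDir z w then 0 else 1) + numBlocks (w :: t)

def startsX (r : List (RLetter A)) : Prop := ∃ a t, r = RLetter.X a :: t
def startsY (r : List (RLetter A)) : Prop := ∃ a t, r = RLetter.Y a :: t
def endsX (r : List (RLetter A)) : Prop := ∃ a, r.getLast? = some (RLetter.X a)
def endsY (r : List (RLetter A)) : Prop := ∃ a, r.getLast? = some (RLetter.Y a)

/-- `R^X_{m,n}`: rankers with exactly `m` blocks, depth `n`, starting with an `X`-block. -/
def RX (m n : ℕ) (r : List (RLetter A)) : Prop :=
  numBlocks r = m ∧ r.length = n ∧ startsX r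

/-- `R^Y_{m,n}`: rankers with exactly `m` blocks, depth `n`, starting with a `Y`-block. -/
def RY (m n : ℕ) (r : List (RLetter A)) : Prop :=
  numBlocks r = m ∧ r.length = n ∧ startsY r

/-- `uR^X_{m,n}`. -/
def uRX (m n : ℕ) (r : List (RLetter A)) : Prop :=
  (∃ m' n', m' ≤ m ∧ n' ≤ n ∧ RX m' n' r) ∨ (∃ m' n', m' < m ∧ n' < n ∧ RY m' n' r)

/-- `uR^Y_{m,n}`. -/
def uRY (m n : ℕ) (r : List (RLetter A)) : Prop :=
  (∃ m' n', m' ≤ m ∧ n' ≤ n ∧ RY m' n' r) ∨ (∃ m' n', m' < m ∧ n' < n ∧ RX m' n' r)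

/-- `uR_{m,n} = uR^X_{m,n} ∪ uR^Y_{m,n}`. -/
def uR (m n : ℕ) (r : List (RLetter A)) : Prop := uRX m n r ∨ uRY m n r

/-- `uR^X_m = ∪_{n ≥ m} uR^X_{m,n}`. -/
def uRXm (m : ℕ) (r : List (RLetter A)) : Prop := ∃ n, m ≤ n ∧ uRX m n r

/-- `uR^Y_m = ∪_{n ≥ m} uR^Y_{m,n}`. -/
def uRYm (m : ℕ) (r : List (RLetter A)) : Prop := ∃ n, m ≤ n ∧ uRY m n r

/-- `r = Z₁ ⋯ Z_n` is condensed on `u`: it is defined on `u` and there is a chain of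
open intervals `(0;|u|+1) = (i₀;j₀) ⊃ (i₁;j₁) ⊃ ⋯ ⊃ (i_{n-1};j_{n-1}) ∋ r(u)`
updated according to the pairs `Z_ℓ Z_{ℓ+1}`. -/
def Condensed (u : List A) (r : List (RLetter A)) : Prop :=
  ∃ (p : ℕ) (i j : ℕ → ℕ),
    evalR u r = some p ∧
    i 0 = 0 ∧ j 0 = u.length + 1 ∧
    (∀ ℓ a b, 1 ≤ ℓ → r[ℓ-1]? = some (RLetter.X a) → r[ℓ]? = some (RLetter.X b) →
        nextOcc u a (i (ℓ-1)) = some (i ℓ) ∧ j ℓ = j (ℓ-1)) ∧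
    (∀ ℓ a b, 1 ≤ ℓ → r[ℓ-1]? = some (RLetter.Y a) → r[ℓ]? = some (RLetter.Y b) →
        i ℓ = i (ℓ-1) ∧ prevOcc u a (j (ℓ-1)) = some (j ℓ)) ∧
    (∀ ℓ a b, 1 ≤ ℓ → r[ℓ-1]? = some (RLetter.X a) → r[ℓ]? = some (RLetter.Y b) →
        i ℓ = i (ℓ-1) ∧ nextOcc u a (i (ℓ-1)) = some (j ℓ)) ∧
    (∀ ℓ a b, 1 ≤ ℓ → r[ℓ-1]? = some (RLetter.Y a) → r[ℓ]? = some (RLetter.X b) →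
        prevOcc u a (j (ℓ-1)) = some (i ℓ) ∧ j ℓ = j (ℓ-1)) ∧
    (∀ ℓ, 1 ≤ ℓ → ℓ < r.length →
        i (ℓ-1) ≤ i ℓ ∧ j ℓ ≤ j (ℓ-1) ∧ (i (ℓ-1) < i ℓ ∨ j ℓ < j (ℓ-1))) ∧
    i (r.length - 1) < p ∧ p < j (r.length - 1)

/-- `u` and `v` agree on rankers from the set `R`. -/
def AgreeDef (R : List (RLetter A) → Prop) (u v : List A) : Prop :=
  ∀ r, R r → (Defined u r ↔ Defined v r)

/-- `u` and `v` agree on condensed rankers from the set `R`. -/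
def AgreeCond (R : List (RLetter A) → Prop) (u v : List A) : Prop :=
  ∀ r, R r → (Condensed u r ↔ Condensed v r)

/-- `u ⊳_{m,n} v`. -/
def trir (m n : ℕ) (u v : List A) : Prop := AgreeCond (uRX m n) u v

/-- `u ⊲_{m,n} v`. -/
def tril (m n : ℕ) (u v : List A) : Prop := AgreeCond (uRY m n) u v

/-- The alphabet (set of letters) of a word. -/
def alph (u : List A) : Finset A := u.toFinset

/-- Condition (WI 1). -/
def WI1 (m n : ℕ) (u v : List A) : Prop := AgreeDef (uR m n) u v

/-- Condition (WI 2). -/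
def WI2 (m n : ℕ) (u v : List A) : Prop :=
  ∀ r r', uR m n r → uR (m-1) (n-1) r' →
    Defined u r → Defined v r → Defined u r' → Defined v r' →
    compare (pos u r) (pos u r') = compare (pos v r) (pos v r')

/-- Condition (WI 3). -/
def WI3 (m n : ℕ) (u v : List A) : Prop :=
  ∀ r r', uR m n r → uR m (n-1) r' →
    ((endsX r ∧ endsY r') ∨ (endsY r ∧ endsX r')) →
    Defined u r → Defined v r → Defined u r' → Defined v r' →
    compare (pos u r) (pos u r') = compare (pos v r) (pos v r')

/-- Condition (WI 1c). -/
def WI1c (m n : ℕ) (u v : List A) : Prop := AgreeCond (uR m n) u v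

/-- Condition (WI 2c). -/
def WI2c (m n : ℕ) (u v : List A) : Prop :=
  ∀ r r', uR m n r → uR (m-1) (n-1) r' →
    Condensed u r → Condensed v r → Condensed u r' → Condensed v r' →
    compare (pos u r) (pos u r') = compare (pos v r) (pos v r')

/-- Condition (WI 3c). -/
def WI3c (m n : ℕ) (u v : List A) : Prop :=
  ∀ r r', uR m n r → uR m (n-1) r' →
    ((endsX r ∧ endsY r') ∨ (endsY r ∧ endsX r')) →
    Condensed u r → Condensed v r → Condensed u r' → Condensed v r' →
    compare (pos u r) (pos u r') = compare (pos v r) (pos v r')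


/-- Formulas of unary temporal logic `TL`. -/
inductive TL (A : Type*) where
  | top : TL A
  | and : TL A → TL A → TL A
  | or : TL A → TL A → TL A
  | not : TL A → TL A
  | Xm : A → TL A → TL A
  | Ym : A → TL A → TL A

/-- Satisfaction of a `TL`-formula at a position `0 ≤ i ≤ |u|+1` of `u`. -/
def satAt (u : List A) : TL A → ℕ → Prop
  | .top, _ => True
  | .and φ ψ, i => satAt u φ i ∧ satAt u ψ i
  | .or φ ψ, i => satAt u φ i ∨ satAt u ψ i
  | .not φ, i => ¬ satAt u φ i
  | .Xm a φ, i => ∃ p, nextOcc u a i = some p ∧ satAt u φ p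
  | .Ym a φ, i => ∃ p, prevOcc u a i = some p ∧ satAt u φ p

/-- Satisfaction of a `TL`-formula by a word. -/
def sat (u : List A) : TL A → Prop
  | .top => True
  | .and φ ψ => sat u φ ∧ sat u ψ
  | .or φ ψ => sat u φ ∨ sat u ψ
  | .not φ => ¬ sat u φ
  | .Xm a φ => satAt u (.Xm a φ) 0
  | .Ym a φ => satAt u (.Ym a φ) (u.length + 1)

/-- The sequences of modal operators along root-to-leaf branches of the parsing tree. -/
def branches : TL A → List (List (RLetter A))
  | .top => [[]]
  | .and φ ψ => branches φ ++ branches ψ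
  | .or φ ψ => branches φ ++ branches ψ
  | .not φ => branches φ
  | .Xm a φ => (branches φ).map (fun b => RLetter.X a :: b)
  | .Ym a φ => (branches φ).map (fun b => RLetter.Y a :: b)

/-- The fragment `uTL^X_{m,n}`: every branch's modal sequence, viewed as a ranker,
is empty or belongs to `uR^X_{m,n}`. -/
def inTLX (m n : ℕ) (φ : TL A) : Prop :=
  ∀ b ∈ branches φ, b = [] ∨ uRX m n b

/-- The fragment `uTL^Y_{m,n}`. -/
def inTLY (m n : ℕ) (φ : TL A) : Prop :=
  ∀ b ∈ branches φ, b = [] ∨ uRY m n b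

theorem branches_ne (φ : TL A) : ∃ b, b ∈ branches φ := by
  induction φ with
  | top => exact ⟨[], by simp [branches]⟩
  | and φ ψ ih _ => obtain ⟨b, hb⟩ := ih; exact ⟨b, by simp [branches, hb]⟩
  | or φ ψ ih _ => obtain ⟨b, hb⟩ := ih; exact ⟨b, by simp [branches, hb]⟩
  | not φ ih => obtain ⟨b, hb⟩ := ih; exact ⟨b, by simpa [branches] using hb⟩
  | Xm a φ ih => obtain ⟨b, hb⟩ := ih; exact ⟨_, by simpa [branches] using ⟨b, hb, rfl⟩⟩
  | Ym a φ ih => obtain ⟨b, hb⟩ := ih; exact ⟨_, by simpa [branches] using ⟨b, hb, rfl⟩⟩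

theorem satAt_congr (u v : List A) (φ : TL A) : ∀ i j : ℕ,
    (∀ b ∈ branches φ, ∀ r, r <+: b → ((evalFrom u r i).isSome ↔ (evalFrom v r j).isSome)) →
    (satAt u φ i ↔ satAt v φ j) := by
  induction φ with
  | top => intros; simp [satAt]
  | and φ ψ ih1 ih2 =>
    intro i j h
    have h1 := ih1 i j (fun b hb => h b (by simp [branches, hb]))
    have h2 := ih2 i j (fun b hb => h b (by simp [branches, hb]))
    simp only [satAt, h1, h2]
  | or φ ψ ih1 ih2 =>
    intro i j h
    have h1 := ih1 i j (fun b hb => h b (by simp [branches, hb]))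
    have h2 := ih2 i j (fun b hb => h b (by simp [branches, hb]))
    simp only [satAt, h1, h2]
  | not φ ih =>
    intro i j h
    have h1 := ih i j (fun b hb => h b (by simpa [branches] using hb))
    simp only [satAt, h1]
  | Xm a φ ih =>
    intro i j h
    have key : ∀ b ∈ branches φ, ∀ r, r <+: b →
        ((evalFrom u (RLetter.X a :: r) i).isSome ↔ (evalFrom v (RLetter.X a :: r) j).isSome) :=
      fun b hb r hr => h (RLetter.X a :: b) (List.mem_map.2 ⟨b, hb, rfl⟩) _
        (List.cons_prefix_cons.2 ⟨rfl, hr⟩)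
    obtain ⟨b0, hb0⟩ := branches_ne φ
    have k0 := key b0 hb0 [] List.nil_prefix
    cases hu : nextOcc u a i <;> cases hv : nextOcc v a j <;>
      simp only [evalFrom, stepR, hu, hv, satAt] at k0 key ⊢
    · simp
    · simp at k0
    · simp at k0
    · simpa using ih _ _ (by simpa using key)
  | Ym a φ ih =>
    intro i j h
    have key : ∀ b ∈ branches φ, ∀ r, r <+: b →
        ((evalFrom u (RLetter.Y a :: r) i).isSome ↔ (evalFrom v (RLetter.Y a :: r) j).isSome) :=
      fun b hb r hr => h (RLetter.Y a :: b) (List.mem_map.2 ⟨b, hb, rfl⟩) _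
        (List.cons_prefix_cons.2 ⟨rfl, hr⟩)
    obtain ⟨b0, hb0⟩ := branches_ne φ
    have k0 := key b0 hb0 [] List.nil_prefix
    cases hu : prevOcc u a i <;> cases hv : prevOcc v a j <;>
      simp only [evalFrom, stepR, hu, hv, satAt] at k0 key ⊢
    · simp
    · simp at k0
    · simp at k0
    · simpa using ih _ _ (by simpa using key)

theorem sat_congr (u v : List A) (φ : TL A)
    (h : ∀ b ∈ branches φ, ∀ r, r ≠ [] → r <+: b → (Defined u r ↔ Defined v r)) :
    sat u φ ↔ sat v φ := by
  induction φ with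
  | top => simp [sat]
  | and φ ψ ih1 ih2 =>
    have h1 := ih1 (fun b hb => h b (by simp [branches, hb]))
    have h2 := ih2 (fun b hb => h b (by simp [branches, hb]))
    simp only [sat, h1, h2]
  | or φ ψ ih1 ih2 =>
    have h1 := ih1 (fun b hb => h b (by simp [branches, hb]))
    have h2 := ih2 (fun b hb => h b (by simp [branches, hb]))
    simp only [sat, h1, h2]
  | not φ ih =>
    have h1 := ih (fun b hb => h b (by simpa [branches] using hb))
    simp only [sat, h1]
  | Xm a φ ih =>
    refine satAt_congr u v (.Xm a φ) _ _ fun b hb r hr => ?_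
    cases r with
    | nil => simp [evalFrom]
    | cons z t =>
      have h1 := h b hb (z :: t) (by simp) hr
      obtain ⟨c, _, rfl⟩ := List.mem_map.1 hb
      obtain ⟨rfl, _⟩ := List.cons_prefix_cons.1 hr
      exact h1
  | Ym a φ ih =>
    refine satAt_congr u v (.Ym a φ) _ _ fun b hb r hr => ?_
    cases r with
    | nil => simp [evalFrom]
    | cons z t =>
      have h1 := h b hb (z :: t) (by simp) hr
      obtain ⟨c, _, rfl⟩ := List.mem_map.1 hb
      obtain ⟨rfl, _⟩ := List.cons_prefix_cons.1 hr
      exact h1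

/-- The formula corresponding to a ranker. -/
def toTL : List (RLetter A) → TL A
  | [] => .top
  | .X a :: r => .Xm a (toTL r)
  | .Y a :: r => .Ym a (toTL r)

theorem branches_toTL (r : List (RLetter A)) : branches (toTL r) = [r] := by
  induction r with
  | nil => rfl
  | cons z t ih => cases z <;> simp [toTL, branches, ih]

theorem satAt_toTL (u : List A) (r : List (RLetter A)) : ∀ i,
    satAt u (toTL r) i ↔ (evalFrom u r i).isSome := by
  induction r with
  | nil => simp [toTL, satAt, evalFrom]
  | cons z t ih =>
    intro i
    cases z with
    | X a => cases h : nextOcc u a i <;> simp [toTL, satAt, evalFrom, stepR, ih, h]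
    | Y a => cases h : prevOcc u a i <;> simp [toTL, satAt, evalFrom, stepR, ih, h]

theorem sat_toTL (u : List A) (r : List (RLetter A)) (hr : r ≠ []) :
    sat u (toTL r) ↔ Defined u r := by
  cases r with
  | nil => exact absurd rfl hr
  | cons z t =>
    cases z with
    | X a => exact satAt_toTL u (.X a :: t) 0
    | Y a => exact satAt_toTL u (.Y a :: t) (u.length + 1)

theorem numBlocks_prefix (b : List (RLetter A)) : ∀ r, r <+: b → numBlocks r ≤ numBlocks b := by
  induction b with
  | nil => intro r hr; rw [List.prefix_nil.1 hr]
  | cons z t ih =>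
    intro r hr
    cases r with
    | nil => simp [numBlocks]
    | cons w s =>
      obtain ⟨rfl, hs⟩ := List.cons_prefix_cons.1 hr
      have h1 := ih s hs
      cases t with
      | nil => rw [List.prefix_nil.1 hs]
      | cons x t' =>
        cases s with
        | nil =>
          have h2 := ih [x] (List.cons_prefix_cons.2 ⟨rfl, List.nil_prefix⟩)
          simp only [numBlocks] at h2 ⊢
          omega
        | cons y s' =>
          obtain ⟨rfl, hs'⟩ := List.cons_prefix_cons.1 hs
          simp only [numBlocks]
          omega

theorem RX_prefix {m n : ℕ} {r b : List (RLetter A)} (h0 : r ≠ []) (hr : r <+: b)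
    (hb : RX m n b) : ∃ m' n', m' ≤ m ∧ n' ≤ n ∧ RX m' n' r := by
  obtain ⟨rfl, rfl, a, t, rfl⟩ := hb
  refine ⟨_, _, numBlocks_prefix _ _ hr, hr.length_le, rfl, rfl, ?_⟩
  cases r with
  | nil => exact absurd rfl h0
  | cons z s => obtain ⟨rfl, _⟩ := List.cons_prefix_cons.1 hr; exact ⟨a, s, rfl⟩

theorem RY_prefix {m n : ℕ} {r b : List (RLetter A)} (h0 : r ≠ []) (hr : r <+: b)
    (hb : RY m n b) : ∃ m' n', m' ≤ m ∧ n' ≤ n ∧ RY m' n' r := by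
  obtain ⟨rfl, rfl, a, t, rfl⟩ := hb
  refine ⟨_, _, numBlocks_prefix _ _ hr, hr.length_le, rfl, rfl, ?_⟩
  cases r with
  | nil => exact absurd rfl h0
  | cons z s => obtain ⟨rfl, _⟩ := List.cons_prefix_cons.1 hr; exact ⟨a, s, rfl⟩

theorem uRX_prefix {m n : ℕ} {r b : List (RLetter A)} (h0 : r ≠ []) (hr : r <+: b)
    (hb : uRX m n b) : uRX m n r := by
  rcases hb with ⟨m', n', h1, h2, h⟩ | ⟨m', n', h1, h2, h⟩
  · obtain ⟨m2, n2, h3, h4, h5⟩ := RX_prefix h0 hr h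
    exact Or.inl ⟨m2, n2, by omega, by omega, h5⟩
  · obtain ⟨m2, n2, h3, h4, h5⟩ := RY_prefix h0 hr h
    exact Or.inr ⟨m2, n2, by omega, by omega, h5⟩

theorem uRY_prefix {m n : ℕ} {r b : List (RLetter A)} (h0 : r ≠ []) (hr : r <+: b)
    (hb : uRY m n b) : uRY m n r := by
  rcases hb with ⟨m', n', h1, h2, h⟩ | ⟨m', n', h1, h2, h⟩
  · obtain ⟨m2, n2, h3, h4, h5⟩ := RY_prefix h0 hr h
    exact Or.inl ⟨m2, n2, by omega, by omega, h5⟩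
  · obtain ⟨m2, n2, h3, h4, h5⟩ := RX_prefix h0 hr h
    exact Or.inr ⟨m2, n2, by omega, by omega, h5⟩

theorem core (R : List (RLetter A) → Prop) (u v : List A)
    (hne : ∀ r, R r → r ≠ [])
    (hR : ∀ r b, r ≠ [] → r <+: b → R b → R r) :
    (∀ φ : TL A, (∀ b ∈ branches φ, b = [] ∨ R b) → (sat u φ ↔ sat v φ)) ↔ AgreeDef R u v := by
  constructor
  · intro h r hr
    rw [← sat_toTL u r (hne r hr), ← sat_toTL v r (hne r hr)]
    refine h _ fun b hb => ?_
    rw [branches_toTL, List.mem_singleton] at hb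
    subst hb
    exact Or.inr hr
  · intro h φ hφ
    refine sat_congr u v φ fun b hb r h0 hr => h r ?_
    rcases hφ b hb with rfl | hb
    · exact absurd (List.prefix_nil.1 hr) h0
    · exact hR r b h0 hr hb

/-- For `1 ≤ m ≤ n`, two words satisfy the same `uTL^X_{m,n}`-formulas
iff they agree on rankers from `uR^X_{m,n}`; likewise for `Y`. -/
theorem statement0 (m n : ℕ) (hm : 1 ≤ m) (hmn : m ≤ n) (u v : List A) :
    ((∀ φ : TL A, inTLX m n φ → (sat u φ ↔ sat v φ)) ↔ AgreeDef (uRX m n) u v) ∧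
    ((∀ φ : TL A, inTLY m n φ → (sat u φ ↔ sat v φ)) ↔ AgreeDef (uRY m n) u v) := by
  constructor
  · refine core (uRX m n) u v ?_ fun r b h0 hr hb => uRX_prefix h0 hr hb
    rintro r (⟨_, _, _, _, _, _, a, t, rfl⟩ | ⟨_, _, _, _, _, _, a, t, rfl⟩) <;> simp
  · refine core (uRY m n) u v ?_ fun r b h0 hr hb => uRY_prefix h0 hr hb
    rintro r (⟨_, _, _, _, _, _, a, t, rfl⟩ | ⟨_, _, _, _, _, _, a, t, rfl⟩) <;> simp

end RankerPaper
end

section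
/- Let s be a ranker, a ∈ A, and r = X_a s. Let u ∈ A+ with a ∈ alph(u), and let u = u_- a u_+ be its a-left factorization. Then r is condensed on u if and only if: s is condensed on u_+, in case s starts with an X-letter; and s is condensed on u_-, in case s starts with a Y-letter. Dually, if r = Y_a s and u = u_- a u_+ is the a-right factorization of u, then r is condensed on u if and only if: s is condensed on u_-, in case s starts with a Y-letter; and s is condensed on u_+, in case s starts with an X-letter. -/
namespace RankerPaper

variable {A : Type*} [DecidableEq A]

theorem nextOcc_iff (u : List A) (a : A) (q k : ℕ) : nextOcc u a q = some k ↔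
    q < k ∧ u[k-1]? = some a ∧ ∀ m, q < m → m < k → u[m-1]? ≠ some a := by
  unfold nextOcc
  rw [List.head?_filter, List.find?_range_eq_some]
  simp only [decide_eq_true_eq, List.mem_range, Bool.not_eq_true', decide_eq_false_iff_not]
  constructor
  · rintro ⟨⟨h1, h2⟩, h3, h4⟩
    exact ⟨h1, h2, fun m hm hk he => h4 m hk ⟨hm, he⟩⟩
  · rintro ⟨h1, h2, h3⟩
    refine ⟨⟨h1, h2⟩, ?_, fun m hm hh => h3 m hh.1 hm hh.2⟩
    obtain ⟨h, -⟩ := List.getElem?_eq_some_iff.1 h2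
    omega

theorem getLast_filter_range (n : ℕ) (P : ℕ → Bool) (k : ℕ) :
    ((List.range n).filter P).getLast? = some k ↔
    k < n ∧ P k = true ∧ ∀ m, k < m → m < n → P m = false := by
  induction n with
  | zero => simp
  | succ n ih =>
    rw [List.range_succ, List.filter_append]
    by_cases hP : P n = true
    · simp only [List.filter_cons, hP, if_true, List.filter_nil, List.getLast?_append,
        List.getLast?_singleton, Option.some_or, Option.some.injEq]
      constructor
      · rintro rfl
        exact ⟨by omega, hP, fun m h1 h2 => by omega⟩
      · rintro ⟨h1, h2, h3⟩
        by_contra hne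
        have := h3 n (by omega) (by omega)
        simp [hP] at this
    · simp only [List.filter_cons, hP, List.filter_nil, Bool.false_eq_true, if_false,
        List.append_nil, ih]
      constructor
      · rintro ⟨h1, h2, h3⟩
        refine ⟨by omega, h2, fun m hm hn => ?_⟩
        rcases Nat.lt_succ_iff_lt_or_eq.1 hn with h | h
        · exact h3 m hm h
        · subst h; simpa using hP
      · rintro ⟨h1, h2, h3⟩
        have : k ≠ n := by rintro rfl; exact hP h2
        exact ⟨by omega, h2, fun m hm hn => h3 m hm (by omega)⟩

theorem prevOcc_iff (u : List A) (a : A) (q k : ℕ) : prevOcc u a q = some k ↔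
    1 ≤ k ∧ k < q ∧ u[k-1]? = some a ∧ ∀ m, k < m → m < q → u[m-1]? ≠ some a := by
  unfold prevOcc
  rw [getLast_filter_range]
  simp only [decide_eq_true_eq, decide_eq_false_iff_not]
  constructor
  · rintro ⟨h1, ⟨h2, h3, h4⟩, h5⟩
    refine ⟨h2, h3, h4, fun m hm hq he => ?_⟩
    obtain ⟨h, -⟩ := List.getElem?_eq_some_iff.1 he
    exact h5 m hm (by omega) ⟨by omega, hq, he⟩
  · rintro ⟨h1, h2, h3, h4⟩
    obtain ⟨h, -⟩ := List.getElem?_eq_some_iff.1 h3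
    exact ⟨by omega, ⟨h1, h2, h3⟩, fun m hm hn hh => h4 m hm hh.2.1 hh.2.2⟩

def refp : RLetter A → ℕ → ℕ → ℕ
  | .X _, i, _ => i
  | .Y _, _, j => j

def updI : RLetter A → ℕ → ℕ → ℕ
  | .X _, k, _ => k
  | .Y _, _, i => i

def updJ : RLetter A → ℕ → ℕ → ℕ
  | .X _, _, j => j
  | .Y _, k, _ => k

def CC (u : List A) : List (RLetter A) → ℕ → ℕ → Prop
  | [], _, _ => True
  | [z], i, j => ∃ k, stepR u z (refp z i j) = some k ∧ i < k ∧ k < j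
  | z :: w :: t, i, j => ∃ k, stepR u z (refp z i j) = some k ∧ i < k ∧ k < j ∧
      CC u (w :: t) (updI w k i) (updJ w k j)

def Gen (u : List A) (z : RLetter A) (t : List (RLetter A)) (i0 j0 : ℕ) : Prop :=
  ∃ (p : ℕ) (i j : ℕ → ℕ), evalFrom u (z :: t) (refp z i0 j0) = some p ∧
    i 0 = i0 ∧ j 0 = j0 ∧
    (∀ l x w, (z :: t)[l]? = some x → (z :: t)[l+1]? = some w →
      ∃ k, stepR u x (refp x (i l) (j l)) = some k ∧
        i (l+1) = updI w k (i l) ∧ j (l+1) = updJ w k (j l)) ∧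
    (∀ l, l < t.length → i l ≤ i (l+1) ∧ j (l+1) ≤ j l ∧ (i l < i (l+1) ∨ j (l+1) < j l)) ∧
    i t.length < p ∧ p < j t.length

theorem CC_lt (u : List A) (z : RLetter A) (t : List (RLetter A)) (i j : ℕ)
    (h : CC u (z :: t) i j) : i < j := by
  cases t with
  | nil => obtain ⟨k, -, h1, h2⟩ := h; omega
  | cons w t => obtain ⟨k, -, h1, h2, -⟩ := h; omega

theorem Gen_iff (u : List A) (t : List (RLetter A)) : ∀ (z : RLetter A) (i0 j0 : ℕ),
    Gen u z t i0 j0 ↔ CC u (z :: t) i0 j0 := by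
  induction t with
  | nil =>
    intro z i0 j0
    constructor
    · rintro ⟨p, i, j, he, hi, hj, -, -, h1, h2⟩
      simp only [List.length_nil, hi, hj] at h1 h2
      refine ⟨p, ?_, h1, h2⟩
      simpa [evalFrom] using he
    · rintro ⟨k, hk, h1, h2⟩
      refine ⟨k, fun _ => i0, fun _ => j0, by simp [evalFrom, hk], rfl, rfl, ?_, ?_, h1, h2⟩
      · intro l x w _ h; simp at h
      · intro l h; simp at h
  | cons w t ih =>
    intro z i0 j0
    constructor
    · rintro ⟨p, i, j, he, hi, hj, hs, hn, h1, h2⟩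
      obtain ⟨k, hk, hik, hjk⟩ := hs 0 z w rfl rfl
      rw [hi, hj] at hk
      rw [hi] at hik
      rw [hj] at hjk
      have hr : refp w (i 1) (j 1) = k := by
        cases w <;> simp_all [refp, updI, updJ]
      have hg : Gen u w t (i 1) (j 1) := by
        refine ⟨p, fun l => i (l+1), fun l => j (l+1), ?_, rfl, rfl, ?_, ?_, h1, h2⟩
        · rw [hr]
          rw [evalFrom, hk] at he
          exact he
        · intro l x y hx hy
          exact hs (l+1) x y (by simpa using hx) (by simpa using hy)
        · intro l hl
          exact hn (l+1) (by simpa using hl)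
      have hc := (ih _ _ _).1 hg
      have hlt := CC_lt _ _ _ _ _ hc
      have hn0 := hn 0 (by simp)
      rw [hi, hj] at hn0
      simp only [Nat.zero_add] at hik hjk hn0
      rw [hik, hjk] at hc hlt hn0
      refine ⟨k, hk, ?_, ?_, hc⟩
      · cases w <;> simp only [updI, updJ] at hlt hn0 <;> omega
      · cases w <;> simp only [updI, updJ] at hlt hn0 <;> omega
    · rintro ⟨k, hk, h1, h2, hc⟩
      obtain ⟨p, i, j, he, hi, hj, hs, hn, h3, h4⟩ := (ih _ _ _).2 hc
      have hr : refp w (updI w k i0) (updJ w k j0) = k := by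
        cases w <;> simp [refp, updI, updJ]
      rw [hr] at he
      refine ⟨p, fun l => Nat.casesOn l i0 i, fun l => Nat.casesOn l j0 j, ?_, rfl, rfl,
        ?_, ?_, h3, h4⟩
      · rw [evalFrom, hk]; exact he
      · intro l x y hx hy
        cases l with
        | zero =>
          simp only [List.getElem?_cons_zero, Option.some.injEq, Nat.zero_add,
            List.getElem?_cons_succ] at hx hy
          subst hx hy
          exact ⟨k, hk, hi, hj⟩
        | succ l => exact hs l x y (by simpa using hx) (by simpa using hy)
      · intro l hl
        cases l with
        | zero =>
          show i0 ≤ i 0 ∧ j 0 ≤ j0 ∧ (i0 < i 0 ∨ j 0 < j0)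
          rw [hi, hj]
          cases w <;> simp only [updI, updJ] <;> omega
        | succ l => exact hn l (by simpa using hl)

theorem Condensed_iff (u : List A) (z : RLetter A) (t : List (RLetter A)) :
    Condensed u (z :: t) ↔ CC u (z :: t) 0 (u.length + 1) := by
  rw [← Gen_iff]
  have hst : refp z 0 (u.length + 1) = startPos u z := by cases z <;> rfl
  constructor
  · rintro ⟨p, i, j, he, hi, hj, c1, c2, c3, c4, hn, h1, h2⟩
    refine ⟨p, i, j, by rw [hst]; exact he, hi, hj, ?_, ?_, by simpa using h1, by simpa using h2⟩
    · intro l x w hx hw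
      rcases x with x | x <;> rcases w with w | w
      · obtain ⟨h, h'⟩ := c1 (l+1) x w (by omega) hx hw
        exact ⟨_, h, rfl, h'⟩
      · obtain ⟨h, h'⟩ := c3 (l+1) x w (by omega) hx hw
        exact ⟨_, h', h, rfl⟩
      · obtain ⟨h, h'⟩ := c4 (l+1) x w (by omega) hx hw
        exact ⟨_, h, rfl, h'⟩
      · obtain ⟨h, h'⟩ := c2 (l+1) x w (by omega) hx hw
        exact ⟨_, h', h, rfl⟩
    · intro l hl
      exact hn (l+1) (by omega) (by simpa using hl)
  · rintro ⟨p, i, j, he, hi, hj, hs, hn, h1, h2⟩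
    refine ⟨p, i, j, by rw [hst] at he; exact he, hi, hj, ?_, ?_, ?_, ?_, ?_,
      by simpa using h1, by simpa using h2⟩
    · intro l x w hl hx hw
      obtain ⟨l, rfl⟩ : ∃ m, l = m + 1 := ⟨l - 1, by omega⟩
      obtain ⟨k, h, h', h''⟩ := hs l _ _ hx hw
      simp only [updI, updJ] at h' h''
      rw [h']; exact ⟨h, h''⟩
    · intro l x w hl hx hw
      obtain ⟨l, rfl⟩ : ∃ m, l = m + 1 := ⟨l - 1, by omega⟩
      obtain ⟨k, h, h', h''⟩ := hs l _ _ hx hw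
      simp only [updI, updJ] at h' h''
      rw [h'']; exact ⟨h', h⟩
    · intro l x w hl hx hw
      obtain ⟨l, rfl⟩ : ∃ m, l = m + 1 := ⟨l - 1, by omega⟩
      obtain ⟨k, h, h', h''⟩ := hs l _ _ hx hw
      simp only [updI, updJ] at h' h''
      rw [h'']; exact ⟨h', h⟩
    · intro l x w hl hx hw
      obtain ⟨l, rfl⟩ : ∃ m, l = m + 1 := ⟨l - 1, by omega⟩
      obtain ⟨k, h, h', h''⟩ := hs l _ _ hx hw
      simp only [updI, updJ] at h' h''
      rw [h']; exact ⟨h, h''⟩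
    · intro l hl hl'
      obtain ⟨l, rfl⟩ : ∃ m, l = m + 1 := ⟨l - 1, by omega⟩
      exact hn l (by simpa using hl')

/-- Transfer between words agreeing (up to a shift by `n`) on an interval. -/
theorem step_shift (u v : List A) (n i j k : ℕ) (z : RLetter A)
    (H : ∀ m, i < m → m < j → u[m+n-1]? = v[m-1]?) (hi : i < k) (hj : k < j) :
    stepR u z (refp z (i+n) (j+n)) = some (k+n) ↔ stepR v z (refp z i j) = some k := by
  rcases z with a | a
  · simp only [stepR, refp, nextOcc_iff]
    rw [H k hi hj]
    refine and_congr (by omega) (and_congr Iff.rfl ?_)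
    constructor
    · intro h m h1 h2
      rw [← H m h1 (by omega)]
      exact h (m+n) (by omega) (by omega)
    · intro h m h1 h2
      have := H (m-n) (by omega) (by omega)
      rw [Nat.sub_add_cancel (by omega)] at this
      rw [this]
      exact h (m-n) (by omega) (by omega)
  · simp only [stepR, refp, prevOcc_iff]
    rw [H k hi hj]
    refine and_congr (by omega) (and_congr (by omega) (and_congr Iff.rfl ?_))
    constructor
    · intro h m h1 h2
      rw [← H m (by omega) (by omega)]
      exact h (m+n) (by omega) (by omega)
    · intro h m h1 h2
      have := H (m-n) (by omega) (by omega)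
      rw [Nat.sub_add_cancel (by omega)] at this
      rw [this]
      exact h (m-n) (by omega) (by omega)

theorem CC_shift (u v : List A) (n : ℕ) (s : List (RLetter A)) : ∀ (i j : ℕ),
    (∀ m, i < m → m < j → u[m+n-1]? = v[m-1]?) →
    (CC u s (i+n) (j+n) ↔ CC v s i j) := by
  induction s with
  | nil => intro i j _; simp [CC]
  | cons z t ih =>
    intro i j H
    cases t with
    | nil =>
      constructor
      · rintro ⟨k, hk, h1, h2⟩
        obtain ⟨k, rfl⟩ : ∃ m, k = m + n := ⟨k - n, by omega⟩
        exact ⟨k, (step_shift u v n i j k z H (by omega) (by omega)).1 hk, by omega, by omega⟩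
      · rintro ⟨k, hk, h1, h2⟩
        exact ⟨k+n, (step_shift u v n i j k z H h1 h2).2 hk, by omega, by omega⟩
    | cons w t =>
      have key : ∀ k, i < k → k < j →
          (CC u (w :: t) (updI w (k+n) (i+n)) (updJ w (k+n) (j+n)) ↔
            CC v (w :: t) (updI w k i) (updJ w k j)) := by
        intro k h1 h2
        cases w with
        | X b => exact ih k j (fun m h3 h4 => H m (by omega) h4)
        | Y b => exact ih i k (fun m h3 h4 => H m h3 (by omega))
      constructor
      · rintro ⟨k, hk, h1, h2, hc⟩
        obtain ⟨k, rfl⟩ : ∃ m, k = m + n := ⟨k - n, by omega⟩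
        exact ⟨k, (step_shift u v n i j k z H (by omega) (by omega)).1 hk, by omega, by omega,
          (key k (by omega) (by omega)).1 hc⟩
      · rintro ⟨k, hk, h1, h2, hc⟩
        exact ⟨k+n, (step_shift u v n i j k z H h1 h2).2 hk, by omega, by omega,
          (key k h1 h2).2 hc⟩

theorem CC_right (um up : List A) (a : A) (s : List (RLetter A)) :
    CC (um ++ a :: up) s (um.length + 1) ((um ++ a :: up).length + 1) ↔
      CC up s 0 (up.length + 1) := by
  have := CC_shift (um ++ a :: up) up (um.length + 1) s 0 (up.length + 1) (by
    intro m h1 h2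
    rw [List.getElem?_append_right (by omega)]
    obtain ⟨m, rfl⟩ : ∃ q, m = q + 1 := ⟨m - 1, by omega⟩
    rw [show m + 1 + (um.length + 1) - 1 - um.length = m + 1 by omega]
    simp)
  rw [← this]
  rw [show 0 + (um.length + 1) = um.length + 1 by omega,
    show up.length + 1 + (um.length + 1) = (um ++ a :: up).length + 1 by simp; omega]

theorem CC_left (um up : List A) (a : A) (s : List (RLetter A)) :
    CC (um ++ a :: up) s 0 (um.length + 1) ↔ CC um s 0 (um.length + 1) :=
  CC_shift (um ++ a :: up) um 0 s 0 (um.length + 1) (by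
    intro m h1 h2
    exact List.getElem?_append_left (by omega))

theorem next_split (um up : List A) (a : A) (h : a ∉ um) :
    nextOcc (um ++ a :: up) a 0 = some (um.length + 1) := by
  rw [nextOcc_iff]
  refine ⟨by omega, by simp, fun m h1 h2 he => h ?_⟩
  rw [List.getElem?_append_left (by omega)] at he
  exact List.mem_of_getElem? he

theorem prev_split (um up : List A) (a : A) (h : a ∉ up) :
    prevOcc (um ++ a :: up) a ((um ++ a :: up).length + 1) = some (um.length + 1) := by
  rw [prevOcc_iff]
  refine ⟨by omega, by simp, by simp, fun m h1 h2 he => h ?_⟩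
  rw [List.getElem?_append_right (by omega)] at he
  rw [show m - 1 - um.length = (m - um.length - 2) + 1 by omega, List.getElem?_cons_succ] at he
  exact List.mem_of_getElem? he

theorem CC_cons (u : List A) (z w : RLetter A) (t : List (RLetter A)) (i j k : ℕ)
    (hk : stepR u z (refp z i j) = some k) (h1 : i < k) (h2 : k < j) :
    CC u (z :: w :: t) i j ↔ CC u (w :: t) (updI w k i) (updJ w k j) := by
  constructor
  · rintro ⟨k', hk', -, -, h⟩
    rw [hk] at hk'
    cases hk'
    exact h
  · intro h
    exact ⟨k, hk, h1, h2, h⟩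

/-- Condensed rankers and `a`-left/right factorizations. -/
theorem statement1 (a : A) (s : List (RLetter A)) (hs : s ≠ []) :
    (∀ um up : List A, a ∉ um →
      ((∀ (b : A) (t : List (RLetter A)), s = RLetter.X b :: t →
          (Condensed (um ++ a :: up) (RLetter.X a :: s) ↔ Condensed up s)) ∧
       (∀ (b : A) (t : List (RLetter A)), s = RLetter.Y b :: t →
          (Condensed (um ++ a :: up) (RLetter.X a :: s) ↔ Condensed um s)))) ∧
    (∀ um up : List A, a ∉ up →
      ((∀ (b : A) (t : List (RLetter A)), s = RLetter.Y b :: t →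
          (Condensed (um ++ a :: up) (RLetter.Y a :: s) ↔ Condensed um s)) ∧
       (∀ (b : A) (t : List (RLetter A)), s = RLetter.X b :: t →
          (Condensed (um ++ a :: up) (RLetter.Y a :: s) ↔ Condensed up s)))) := by
  have key : ∀ (um up : List A) (z : RLetter A),
      stepR (um ++ a :: up) z (refp z 0 ((um ++ a :: up).length + 1)) = some (um.length + 1) →
      (∀ (b : A) (t : List (RLetter A)), s = RLetter.X b :: t →
          (Condensed (um ++ a :: up) (z :: s) ↔ Condensed up s)) ∧
       (∀ (b : A) (t : List (RLetter A)), s = RLetter.Y b :: t →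
          (Condensed (um ++ a :: up) (z :: s) ↔ Condensed um s)) := by
    intro um up z hz
    constructor
    · rintro b t rfl
      rw [Condensed_iff, Condensed_iff, CC_cons _ _ _ _ _ _ _ hz (by omega) (by simp)]
      exact CC_right um up a _
    · rintro b t rfl
      rw [Condensed_iff, Condensed_iff, CC_cons _ _ _ _ _ _ _ hz (by omega) (by simp)]
      exact CC_left um up a _
  exact ⟨fun um up h => key um up (RLetter.X a) (next_split um up a h),
    fun um up h => (key um up (RLetter.Y a) (prev_split um up a h)).symm⟩

end RankerPaper
end
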